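/- Suppose q satisfies condition A for x ≥ 0. Then the Dirichlet and Neumann operators are boundedly invertible in L₂(ℝ₊): there is a constant C > 0 such that for every f ∈ L₂(ℝ₊) there exists a unique solution y of −y″+qy=f with y ∈ L₂(ℝ₊) and y(0)=0, and it satisfies ‖y‖_{L₂(ℝ₊)} ≤ C‖f‖_{L₂(ℝ₊)}; similarly, for every f ∈ L₂(ℝ₊) there exists a unique solution y of −y″+qy=f with y ∈ L₂(ℝ₊) and y′(0)=0, and it satisfies ‖y‖_{L₂(ℝ₊)} ≤ C‖f‖_{L₂(ℝ₊)}. -/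

import Mathlib

open MeasureTheory Filter Topology Complex

noncomputable section

/-- The open sector `Π_κ = {z ≠ 0 : arg z ∈ (-π+κ, π-κ)}`. -/
def PiSector (κ : ℝ) : Set ℂ :=
  {z : ℂ | z ≠ 0 ∧ -Real.pi + κ < z.arg ∧ z.arg < Real.pi - κ}

/-- `f` is locally absolutely continuous on `[a,∞)` with a.e. derivative `f'`:
`f'` is locally integrable there and `f` is recovered from `f'` by integration. -/
def LocACOn (f f' : ℝ → ℂ) (a : ℝ) : Prop :=
  (∀ b, a ≤ b → IntervalIntegrable f' volume a b) ∧
  ∀ x, a ≤ x → f x = f a + ∫ t in a..x, f' t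

/-- `y` (with first derivative `y'`) is a solution of `-y'' + q y = f` on `ℝ₊`:
`y, y'` are locally absolutely continuous on `[0,∞)` and the a.e. derivative of
`y'` equals `q y - f`. -/
def IsSol (q f y y' : ℝ → ℂ) : Prop :=
  LocACOn y y' 0 ∧ LocACOn y' (fun x => q x * y x - f x) 0

/-- `y` is nontrivial on `ℝ₊`. -/
def NontrivialSol (y : ℝ → ℂ) : Prop := ∃ x, 0 ≤ x ∧ y x ≠ 0

/-- membership in the weighted space `L₂(ℝ₊, w)`. -/
def MemL2 (w : ℝ → ℝ) (f : ℝ → ℂ) : Prop :=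
  AEStronglyMeasurable f (volume.restrict (Set.Ici (0:ℝ))) ∧
  IntegrableOn (fun x => w x * ‖f x‖ ^ 2) (Set.Ici (0:ℝ)) volume

/-- the branch `p = √q` with positive real part (principal branch). -/
def sqrtQ (q : ℝ → ℂ) (x : ℝ) : ℂ := (q x) ^ ((1 : ℂ) / 2)

/-- the a.e. derivative of `sqrtQ q`, where `q'` is the a.e. derivative of `q`. -/
def sqrtQD (q q' : ℝ → ℂ) (x : ℝ) : ℂ := q' x / (2 * sqrtQ q x)

/-- the weight `ρ = Re p - (1/2)|p'/p|`. -/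
def rho (q q' : ℝ → ℂ) (x : ℝ) : ℝ :=
  (sqrtQ q x).re - (1 / 2) * ‖sqrtQD q q' x / sqrtQ q x‖

/-- Condition A for `q` on `[x₀,∞)` with constant `C`, where `q'` is the
a.e. derivative of `q`: `q ∈ L¹loc(ℝ₊)`, `q` is locally absolutely continuous
on `[x₀,∞)`, `q` takes values in a sector `Π_κ` on `[x₀,∞)`, the branch
`p = √q` has positive real part there, and
`Re p ≥ C + (1/2)|p'/p|` a.e. on `[x₀,∞)`. -/
def CondA (q q' : ℝ → ℂ) (x₀ C : ℝ) : Prop :=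
  LocallyIntegrableOn q (Set.Ici (0:ℝ)) volume ∧
  LocACOn q q' x₀ ∧
  (∃ κ, 0 ≤ κ ∧ ∀ x, x₀ ≤ x → q x ∈ PiSector κ) ∧
  (∀ x, x₀ ≤ x → 0 < (sqrtQ q x).re) ∧
  0 < C ∧
  ∀ᵐ x : ℝ, x₀ ≤ x → C + (1 / 2) * ‖sqrtQD q q' x / sqrtQ q x‖ ≤ (sqrtQ q x).re

/-- The set `𝒩` of spectral parameters `lam` such that `q - lam` satisfies
condition A for `x ≥ x₁(lam)` for some `x₁(lam) ≥ 0` (note `(q - lam)' = q'`). -/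
def NSet (q q' : ℝ → ℂ) : Set ℂ :=
  {lam : ℂ | ∃ x₁ C, 0 ≤ x₁ ∧ CondA (fun x => q x - lam) q' x₁ C}

/-!
Write `p = √q`, `s = 1/p` and `u = s y'`. The proof rests on the energy `Ψ = Re (s y' ȳ)`.
Almost everywhere `s' = -p'/p²`, so for a solution of `-y'' + q y = f`
`Ψ' = Re (-(p'/p) u ȳ - s f ȳ) + Re p (|u|² + |y|²)`,
and `|(p'/p) u ȳ| ≤ ½ |p'/p| (|u|² + |y|²)` is exactly what condition A absorbs. Hence
`Ψ' ≥ C₀ (|u|² + |y|²) - |s| |f| |y|` (`pointwise_energy`, `energy_ineq`). The energy vanishes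
wherever `y` or `y'` does, so both boundary conditions are treated at once.

*Existence.* Let `φ` be a nontrivial homogeneous solution satisfying the boundary condition at `0`.
Its energy is eventually positive, so `φ X ≠ 0` for large `X`, and a solution `y₀` with zero
initial data can be corrected to a solution `y₀ + c φ` vanishing at `X`. The energy is then zero
at both ends of `[0, X]`, which gives `∫₀^X |y|² ≤ C₀⁻⁴ ∫₀^X |f|²`, uniformly in `X`. The
constants `c` are therefore bounded as `X → ∞`, and any limit point gives an `L₂` solution with
the same bound (`exists_bounded_sol`). The initial value problems are solved by a Neumann
series for the associated Volterra equation (`volterra_exists`, `ivp_exists`).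

*Uniqueness.* If a nontrivial homogeneous solution has `Ψ 0 = 0`, then `Ψ` is eventually positive
and nondecreasing. Since `Ψ ≤ |u| |y|`, there
`(-1/Ψ)' ≥ C₀ |u|² / Ψ² ≥ C₀ (2 - |y|²)`.
The left-hand side has bounded integral, so `|y|²` cannot be integrable (`not_memL2_of_hom`).

Absolute continuity of `s`, and hence of `Ψ`, follows from `Re p ≥ C₀`, which makes `1/√q` a
Lipschitz function of `q` along the values taken (`CondA.ac_inv`).
-/

/-! ### Initial value problems -/

/-- Linear Volterra equations with continuous data have a global continuous solution on `[0, ∞)`: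
the sum of the Picard iterates, whose `k`-th term is at most `B (M x)^k / k!` on `[0, X]`. -/
theorem volterra_exists {E : Type*} [NormedAddCommGroup E] [NormedSpace ℝ E] [CompleteSpace E]
    (A : ℝ → E →L[ℝ] E) (hA : Continuous A) (h : ℝ → E) (hh : Continuous h) :
    ∃ Y : ℝ → E, Continuous Y ∧ ∀ x, 0 ≤ x → Y x = h x + ∫ t in (0:ℝ)..x, A t (Y t) := by
  let v : ℕ → ℝ → E := fun k => Nat.rec h (fun _ u x => ∫ t in (0:ℝ)..x, A t (u t)) k
  have v0 : v 0 = h := rfl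
  have vs : ∀ k x, v (k+1) x = ∫ t in (0:ℝ)..x, A t (v k t) := fun _ _ => rfl
  have vc : ∀ k, Continuous (v k) := by
    intro k
    induction k with
    | zero => exact hh
    | succ k ih =>
      have : v (k+1) = fun x => ∫ t in (0:ℝ)..x, A t (v k t) := rfl
      rw [this]
      exact intervalIntegral.continuous_primitive
        (fun a b => (hA.clm_apply ih).intervalIntegrable a b) 0
  -- factorial decay of the iterates on each compact interval
  have bound : ∀ X, 0 ≤ X → ∃ B M : ℝ, 0 ≤ B ∧ 0 ≤ M ∧ (∀ t ∈ Set.Icc 0 X, ‖A t‖ ≤ M) ∧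
      ∀ k, ∀ x ∈ Set.Icc 0 X, ‖v k x‖ ≤ B * (M ^ k * x ^ k / k.factorial) := by
    intro X hX
    obtain ⟨M, hM⟩ := (isCompact_Icc (a := (0:ℝ)) (b := X)).exists_bound_of_continuousOn
      hA.continuousOn
    obtain ⟨B, hB⟩ := (isCompact_Icc (a := (0:ℝ)) (b := X)).exists_bound_of_continuousOn
      hh.continuousOn
    have hM0 : 0 ≤ M := (norm_nonneg _).trans (hM 0 ⟨le_rfl, hX⟩)
    have hB0 : 0 ≤ B := (norm_nonneg _).trans (hB 0 ⟨le_rfl, hX⟩)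
    refine ⟨B, M, hB0, hM0, hM, ?_⟩
    intro k
    induction k with
    | zero => intro x hx; simpa [v0] using hB x hx
    | succ k ih =>
      intro x hx
      rw [vs]
      have h1 : ‖∫ t in (0:ℝ)..x, A t (v k t)‖ ≤
          ∫ t in (0:ℝ)..x, M * (B * (M ^ k * t ^ k / k.factorial)) := by
        apply intervalIntegral.norm_integral_le_of_norm_le hx.1
        · refine Filter.Eventually.of_forall fun t ht => ?_
          have ht' : t ∈ Set.Icc 0 X := ⟨ht.1.le, ht.2.trans hx.2⟩
          exact (A t).le_of_opNorm_le_of_le (hM t ht') (ih t ht')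
        · exact (by fun_prop : Continuous _).intervalIntegrable _ _
      refine h1.trans (le_of_eq ?_)
      have h2 : (fun t : ℝ => M * (B * (M ^ k * t ^ k / k.factorial))) =
          fun t => (M * B * M ^ k / k.factorial) * t ^ k := by
        funext t; ring
      rw [h2, intervalIntegral.integral_const_mul, integral_pow, Nat.factorial_succ]
      push_cast
      have : (k.factorial : ℝ) ≠ 0 := by positivity
      have : (k + 1 : ℝ) ≠ 0 := by positivity
      simp only [ne_eq, Nat.succ_ne_zero, not_false_eq_true, zero_pow, sub_zero]
      field_simp
      ring
  have bound' : ∀ X, 0 ≤ X → ∃ u : ℕ → ℝ, ∃ M : ℝ, Summable u ∧ (∀ k, 0 ≤ u k) ∧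
      (∀ t ∈ Set.Icc 0 X, ‖A t‖ ≤ M) ∧ ∀ k, ∀ x ∈ Set.Icc 0 X, ‖v k x‖ ≤ u k := by
    intro X hX
    obtain ⟨B, M, hB, hM, hA', hv⟩ := bound X hX
    refine ⟨fun k => B * ((M * X) ^ k / k.factorial), M,
      (Real.summable_pow_div_factorial (M * X)).mul_left B, fun k => by positivity, hA', ?_⟩
    intro k x hx
    refine (hv k x hx).trans ?_
    have := hx.1
    have := hx.2
    simp only [mul_pow]
    gcongr
  let Y : ℝ → E := fun x => ∑' k, v k (max x 0)
  have hYsum : ∀ x, 0 ≤ x → HasSum (fun k => v k x) (Y x) := by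
    intro x hx
    obtain ⟨u, M, hu, -, -, hv⟩ := bound' x hx
    have : Summable (fun k => v k x) :=
      Summable.of_norm_bounded hu (fun k => hv k x ⟨hx, le_rfl⟩)
    simpa [Y, max_eq_left hx] using this.hasSum
  have hYc : Continuous Y := by
    rw [continuous_iff_continuousAt]
    intro x
    obtain ⟨u, M, hu, -, -, hv⟩ := bound' (|x| + 1) (by positivity)
    have : ContinuousOn Y (Set.Iic (|x| + 1)) := by
      refine continuousOn_tsum (u := u) (fun k => ((vc k).comp (by fun_prop)).continuousOn) hu ?_
      intro k t ht
      exact hv k _ ⟨le_max_right _ _, max_le ht (by positivity)⟩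
    exact this.continuousAt (Iic_mem_nhds (by linarith [le_abs_self x]))
  refine ⟨Y, hYc, fun x hx => ?_⟩
  obtain ⟨u, M, hu, hu0, hAM, hv⟩ := bound' x hx
  have hM0 : 0 ≤ M := (norm_nonneg _).trans (hAM 0 ⟨le_rfl, hx⟩)
  have key : HasSum (fun k => ∫ t in (0:ℝ)..x, A t (v k t)) (∫ t in (0:ℝ)..x, A t (Y t)) := by
    refine intervalIntegral.hasSum_integral_of_dominated_convergence (fun k _ => M * u k) ?_ ?_ ?_ ?_ ?_
    · intro k; exact (hA.clm_apply (vc k)).aestronglyMeasurable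
    · intro k
      refine Filter.Eventually.of_forall fun t ht => ?_
      rw [Set.uIoc_of_le hx] at ht
      exact (A t).le_of_opNorm_le_of_le (hAM t ⟨ht.1.le, ht.2⟩) (hv k t ⟨ht.1.le, ht.2⟩)
    · exact Filter.Eventually.of_forall fun t _ => hu.mul_left M
    · exact intervalIntegrable_const
    · refine Filter.Eventually.of_forall fun t ht => ?_
      rw [Set.uIoc_of_le hx] at ht
      exact (A t).hasSum (hYsum t ht.1.le)
  have h3 := (hasSum_nat_add_iff' 1).mpr (hYsum x hx)
  have h4 : Y x - h x = ∫ t in (0:ℝ)..x, A t (Y t) := by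
    have := h3.unique key
    simpa [v0] using this
  rw [← h4]; abel

/-- The initial value problem `-y'' + q y = f`, `y 0 = α`, `y' 0 = β`, as a Volterra equation for
the pair `(y, y')`. Only local integrability of `f` is used: it enters through the continuous
free term `(α, β - ∫₀ˣ f)`. The data are first extended from `[0, ∞)` to the whole line. -/
theorem ivp_exists (q f : ℝ → ℂ) (hq : ContinuousOn q (Set.Ici 0))
    (hf : ∀ b, 0 ≤ b → IntervalIntegrable f volume 0 b) (α β : ℂ) :
    ∃ y y', IsSol q f y y' ∧ Continuous y ∧ y 0 = α ∧ y' 0 = β := by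
  let Q : ℝ → ℂ := fun x => q (max x 0)
  have hQ : Continuous Q :=
    hq.comp_continuous (by fun_prop) (fun x => Set.mem_Ici.2 (le_max_right _ _))
  let g : ℝ → ℂ := (Set.Ioi 0).indicator f
  have hg0 : ∀ b, IntervalIntegrable g volume 0 b := by
    intro b
    rcases le_total 0 b with hb | hb
    · refine (hf b hb).congr ?_
      rw [Set.uIoc_of_le hb]
      intro t ht
      simp [g, Set.indicator_of_mem (show t ∈ Set.Ioi (0:ℝ) from ht.1)]
    · refine (intervalIntegrable_const (c := (0:ℂ))).congr ?_
      rw [Set.uIoc_of_ge hb]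
      intro t ht
      simp [g, Set.indicator_of_notMem (show t ∉ Set.Ioi (0:ℝ) from not_lt.2 ht.2)]
  have hg : ∀ a b, IntervalIntegrable g volume a b := fun a b => (hg0 a).symm.trans (hg0 b)
  have hG := intervalIntegral.continuous_primitive hg 0
  let A : ℝ → (ℂ × ℂ) →L[ℝ] (ℂ × ℂ) := fun t =>
    (ContinuousLinearMap.inl ℝ ℂ ℂ).comp (ContinuousLinearMap.snd ℝ ℂ ℂ) +
    Q t • (ContinuousLinearMap.inr ℝ ℂ ℂ).comp (ContinuousLinearMap.fst ℝ ℂ ℂ)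
  have hA : Continuous A := continuous_const.add (hQ.smul continuous_const)
  have hAa : ∀ t v, A t v = (v.2, Q t * v.1) := by intro t v; simp [A]
  obtain ⟨Y, hYc, hY⟩ := volterra_exists A hA (fun x => (α, β - ∫ t in (0:ℝ)..x, g t))
    (continuous_const.prodMk (continuous_const.sub hG))
  have hAY : Continuous fun t => A t (Y t) := hA.clm_apply hYc
  have e1 : ∀ x, 0 ≤ x → (Y x).1 = α + ∫ t in (0:ℝ)..x, (Y t).2 := by
    intro x hx
    have := congrArg (ContinuousLinearMap.fst ℝ ℂ ℂ) (hY x hx)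
    rw [map_add, ← ContinuousLinearMap.intervalIntegral_comp_comm _
      (hAY.intervalIntegrable _ _)] at this
    simpa [hAa] using this
  have e2 : ∀ x, 0 ≤ x → (Y x).2 = β + ∫ t in (0:ℝ)..x, (q t * (Y t).1 - f t) := by
    intro x hx
    have := congrArg (ContinuousLinearMap.snd ℝ ℂ ℂ) (hY x hx)
    rw [map_add, ← ContinuousLinearMap.intervalIntegral_comp_comm _
      (hAY.intervalIntegrable _ _)] at this
    simp only [hAa, ContinuousLinearMap.coe_snd'] at this
    have hQY : IntervalIntegrable (fun t => Q t * (Y t).1) volume 0 x :=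
      (hQ.mul hYc.fst).intervalIntegrable _ _
    rw [this, sub_add_eq_add_sub, add_sub_assoc, ← intervalIntegral.integral_sub hQY (hg _ _)]
    congr 1
    apply intervalIntegral.integral_congr_ae
    refine Filter.Eventually.of_forall fun t ht => ?_
    rw [Set.uIoc_of_le hx] at ht
    simp [Q, g, max_eq_left ht.1.le, Set.indicator_of_mem (show t ∈ Set.Ioi (0:ℝ) from ht.1)]
  have z1 : (Y 0).1 = α := by simpa using e1 0 le_rfl
  have z2 : (Y 0).2 = β := by simpa using e2 0 le_rfl
  refine ⟨fun x => (Y x).1, fun x => (Y x).2, ⟨⟨?_, ?_⟩, ⟨?_, ?_⟩⟩, hYc.fst, z1, z2⟩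
  · intro b _; exact hYc.snd.intervalIntegrable _ _
  · intro x hx; simp only [z1]; exact e1 x hx
  · intro b hb
    refine IntervalIntegrable.sub ?_ (hf b hb)
    refine ContinuousOn.intervalIntegrable ?_
    rw [Set.uIcc_of_le hb]
    exact (hq.mono Set.Icc_subset_Ici_self).mul hYc.fst.continuousOn
  · intro x hx; simp only [z2]; exact e2 x hx

/-! ### Absolute continuity -/

/-- Absolute continuity passes from `g` to any `f` whose increments are dominated by those of
`g`; this covers compositions with Lipschitz maps. -/
theorem ac_of_dist_le {X Y : Type*} [PseudoMetricSpace X] [PseudoMetricSpace Y]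
    {f : ℝ → X} {g : ℝ → Y} {a b K : ℝ}
    (hg : AbsolutelyContinuousOnInterval g a b)
    (h : ∀ x ∈ Set.uIcc a b, ∀ y ∈ Set.uIcc a b, dist (f x) (f y) ≤ K * dist (g x) (g y)) :
    AbsolutelyContinuousOnInterval f a b := by
  unfold AbsolutelyContinuousOnInterval at hg ⊢
  refine squeeze_zero' (Filter.Eventually.of_forall fun _ =>
    Finset.sum_nonneg fun _ _ => dist_nonneg) ?_ (by simpa using hg.const_mul K)
  rw [eventually_inf_principal]
  refine Filter.Eventually.of_forall fun E hE => ?_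
  rw [Finset.mul_sum]
  exact Finset.sum_le_sum fun i hi => h _ (hE.1 i hi).1 _ (hE.1 i hi).2

theorem LocACOn.interval {f f' : ℝ → ℂ} (h : LocACOn f f' 0) {a b : ℝ} (ha : 0 ≤ a) (hb : 0 ≤ b) :
    IntervalIntegrable f' volume a b := (h.1 a ha).symm.trans (h.1 b hb)

theorem LocACOn.sub_eq {f f' : ℝ → ℂ} (h : LocACOn f f' 0) {a b : ℝ} (ha : 0 ≤ a) (hb : 0 ≤ b) :
    f b - f a = ∫ t in a..b, f' t := by
  rw [h.2 a ha, h.2 b hb, ← intervalIntegral.integral_interval_sub_left (h.1 b hb) (h.1 a ha)]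
  ring

theorem LocACOn.ac {f f' : ℝ → ℂ} (h : LocACOn f f' 0) {X : ℝ} (hX : 0 ≤ X) :
    AbsolutelyContinuousOnInterval f 0 X := by
  have hn : IntervalIntegrable (fun t => ‖f' t‖) volume 0 X := (h.1 X hX).norm
  refine ac_of_dist_le (K := 1)
    (hn.absolutelyContinuousOnInterval_intervalIntegral (c := 0) Set.left_mem_uIcc) ?_
  intro x hx y hy
  rw [Set.uIcc_of_le hX] at hx hy
  rw [dist_comm, dist_eq_norm, h.sub_eq hx.1 hy.1, one_mul, dist_comm, Real.dist_eq,
    intervalIntegral.integral_interval_sub_left (h.interval le_rfl hy.1).norm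
      (h.interval le_rfl hx.1).norm]
  exact intervalIntegral.norm_integral_le_abs_integral_norm

theorem LocACOn.continuousOn {f f' : ℝ → ℂ} (h : LocACOn f f' 0) :
    ContinuousOn f (Set.Ici 0) := by
  intro x hx
  have hx : 0 ≤ x := hx
  have h1 := (h.ac (X := x + 1) (by linarith)).continuousOn
  rw [Set.uIcc_of_le (by linarith)] at h1
  refine (h1 x ⟨hx, by linarith⟩).mono_of_mem_nhdsWithin ?_
  rw [← Set.Ici_inter_Iic, Set.inter_comm]
  exact inter_mem (mem_nhdsWithin_of_mem_nhds (Iic_mem_nhds (by linarith))) self_mem_nhdsWithin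

theorem LocACOn.ae_hasDerivAt {f f' : ℝ → ℂ} (h : LocACOn f f' 0) (X : ℝ) :
    ∀ᵐ x, x ∈ Set.Ioo 0 X → HasDerivAt f (f' x) x := by
  rcases le_total X 0 with hX | hX
  · refine Filter.Eventually.of_forall fun x hx => ?_
    exact absurd (hx.1.trans hx.2) (not_lt.2 hX)
  filter_upwards [(h.1 X hX).ae_hasDerivAt_integral] with x hx hx'
  have h1 := (hx (by rw [Set.uIcc_of_le hX]; exact Set.Ioo_subset_Icc_self hx') 0
    Set.left_mem_uIcc).const_add (f 0)
  refine h1.congr_of_eventuallyEq ?_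
  filter_upwards [Ioi_mem_nhds hx'.1] with y hy
  exact h.2 y (le_of_lt hy)

/-- A differential inequality `g ≤ Ψ'` that holds almost everywhere may be integrated when `Ψ` is
absolutely continuous. -/
theorem integral_le_sub_of_ac {Ψ g : ℝ → ℝ} {a b : ℝ} (hab : a ≤ b)
    (hΨ : AbsolutelyContinuousOnInterval Ψ a b) (hg : IntervalIntegrable g volume a b)
    (h : ∀ᵐ x, x ∈ Set.Ioo a b → ∃ d, HasDerivAt Ψ d x ∧ g x ≤ d) :
    ∫ x in a..b, g x ≤ Ψ b - Ψ a := by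
  rw [← hΨ.integral_deriv_eq_sub]
  refine intervalIntegral.integral_mono_ae_restrict hab hg hΨ.intervalIntegrable_deriv ?_
  rw [← restrict_Ioo_eq_restrict_Icc]
  rw [Filter.EventuallyLE, ae_restrict_iff' measurableSet_Ioo]
  filter_upwards [h] with x hx hx'
  obtain ⟨d, hd, hgd⟩ := hx hx'
  rwa [hd.deriv]

section CondA

variable {q q' : ℝ → ℂ} {C₀ : ℝ}

theorem sqrtQ_sq (x : ℝ) : sqrtQ q x ^ 2 = q x := by
  have := Complex.cpow_nat_inv_pow (q x) (n := 2) (by norm_num)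
  simpa only [sqrtQ, Nat.cast_ofNat, one_div] using this

theorem CondA.pos (hA : CondA q q' 0 C₀) : 0 < C₀ := hA.2.2.2.2.1

theorem CondA.slit (hA : CondA q q' 0 C₀) {x : ℝ} (hx : 0 ≤ x) : q x ∈ slitPlane := by
  obtain ⟨κ, hκ, h⟩ := hA.2.2.1
  obtain ⟨h0, -, h2⟩ := h x hx
  rw [mem_slitPlane_iff_arg]
  exact ⟨by linarith, h0⟩

theorem CondA.continuousOn_sqrtQ (hA : CondA q q' 0 C₀) : ContinuousOn (sqrtQ q) (Set.Ici 0) :=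
  hA.2.1.continuousOn.cpow_const fun _ hx => hA.slit hx

/-- The almost everywhere bound `C₀ ≤ Re p` holds everywhere by continuity of `p`. -/
theorem CondA.le_re (hA : CondA q q' 0 C₀) {x : ℝ} (hx : 0 ≤ x) : C₀ ≤ (sqrtQ q x).re := by
  have hae : ∀ᵐ t : ℝ, 0 ≤ t → C₀ ≤ (sqrtQ q t).re := by
    filter_upwards [hA.2.2.2.2.2] with t ht ht0
    have := ht ht0
    have : 0 ≤ (1 / 2) * ‖sqrtQD q q' t / sqrtQ q t‖ := by positivity
    linarith
  -- a failure at `x` persists on some `[x, u)`, which is not a null set; one-sided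
  -- neighbourhoods are needed because `x = 0` is allowed
  have hc : ContinuousOn (fun t => (sqrtQ q t).re) (Set.Ici 0) :=
    continuous_re.comp_continuousOn hA.continuousOn_sqrtQ
  by_contra hlt
  push Not at hlt
  have h1 : ∀ᶠ t in 𝓝[≥] x, (sqrtQ q t).re < C₀ :=
    ((hc x hx).mono (Set.Ici_subset_Ici.2 hx)).eventually_lt_const hlt
  obtain ⟨u, hu, hsub⟩ := mem_nhdsGE_iff_exists_Ico_subset.1 h1
  have h2 : volume (Set.Ioo x u) = 0 := by
    refine measure_mono_null ?_ hae
    intro t ht hcon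
    have h3 : (sqrtQ q t).re < C₀ := hsub ⟨ht.1.le, ht.2⟩
    exact absurd (hcon (hx.trans ht.1.le)) (not_le.2 h3)
  rw [Real.volume_Ioo, ENNReal.ofReal_eq_zero] at h2
  have : x < u := hu
  linarith

theorem CondA.le_norm (hA : CondA q q' 0 C₀) {x : ℝ} (hx : 0 ≤ x) : C₀ ≤ ‖sqrtQ q x‖ :=
  (hA.le_re hx).trans (re_le_norm _)

theorem CondA.ne_zero (hA : CondA q q' 0 C₀) {x : ℝ} (hx : 0 ≤ x) : sqrtQ q x ≠ 0 := by
  rw [← norm_pos_iff]; exact hA.pos.trans_le (hA.le_norm hx)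

theorem CondA.norm_inv_le (hA : CondA q q' 0 C₀) {x : ℝ} (hx : 0 ≤ x) :
    ‖(sqrtQ q x)⁻¹‖ ≤ C₀⁻¹ := by
  rw [norm_inv]; exact inv_anti₀ hA.pos (hA.le_norm hx)

/-- `1/p` is absolutely continuous, because
`1/p(x) - 1/p(y) = -(q(x) - q(y)) / (p(x) p(y) (p(x) + p(y)))` and each factor of the
denominator is bounded below. -/
theorem CondA.ac_inv (hA : CondA q q' 0 C₀) {X : ℝ} (hX : 0 ≤ X) :
    AbsolutelyContinuousOnInterval (fun x => (sqrtQ q x)⁻¹) 0 X := by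
  refine ac_of_dist_le (K := C₀⁻¹ * C₀⁻¹ * (2 * C₀)⁻¹) (hA.2.1.ac hX) ?_
  intro x hx y hy
  rw [Set.uIcc_of_le hX] at hx hy
  have hp := hA.ne_zero hx.1
  have hr := hA.ne_zero hy.1
  have hC := hA.pos
  have hsum : 2 * C₀ ≤ ‖sqrtQ q x + sqrtQ q y‖ := by
    refine le_trans ?_ (re_le_norm _)
    rw [add_re]
    linarith [hA.le_re hx.1, hA.le_re hy.1]
  have hs0 : sqrtQ q x + sqrtQ q y ≠ 0 := by
    rw [← norm_pos_iff]; linarith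
  have e : (sqrtQ q x)⁻¹ - (sqrtQ q y)⁻¹ =
      -((sqrtQ q x)⁻¹ * (sqrtQ q y)⁻¹ * (sqrtQ q x + sqrtQ q y)⁻¹ * (q x - q y)) := by
    rw [← sqrtQ_sq (q := q) x, ← sqrtQ_sq (q := q) y]
    field_simp
    ring
  rw [dist_eq_norm, dist_eq_norm, e, norm_neg, norm_mul, norm_mul, norm_mul]
  have := hA.norm_inv_le hx.1
  have := hA.norm_inv_le hy.1
  have : ‖(sqrtQ q x + sqrtQ q y)⁻¹‖ ≤ (2 * C₀)⁻¹ := by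
    rw [norm_inv]; exact inv_anti₀ (by linarith) hsum
  gcongr

theorem hasDerivAt_sqrtQ {x : ℝ} (h : q x ∈ slitPlane) (hq : HasDerivAt q (q' x) x) :
    HasDerivAt (sqrtQ q) (sqrtQD q q' x) x := by
  have h1 : HasDerivAt (sqrtQ q) _ x :=
    (hasStrictDerivAt_cpow_const (c := (1:ℂ)/2) h).hasDerivAt.comp x hq
  refine h1.congr_deriv ?_
  have h0 : q x ≠ 0 := slitPlane_ne_zero h
  have hp : sqrtQ q x ≠ 0 := by
    intro h2; apply h0; rw [← sqrtQ_sq (q := q), h2]; ring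
  have : q x ^ ((1:ℂ)/2 - 1) = sqrtQ q x / q x := by
    rw [cpow_sub _ _ h0, cpow_one]; rfl
  rw [this, sqrtQD, ← sqrtQ_sq (q := q) x]
  field_simp

end CondA

/-! ### The energy inequality -/

/-- The algebraic core of the energy inequality. With `Y`, `Y'`, `F` the values of `y`, `y'`, `f`
at a point, the right-hand side is the derivative of `Re (y' ȳ / p)` after substituting
`y'' = p² y - f`. -/
theorem pointwise_energy {C₀ : ℝ} (p p' Y Y' F : ℂ) (hp : p ≠ 0)
    (h : C₀ + (1 / 2) * ‖p' / p‖ ≤ p.re) :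
    C₀ * (‖p⁻¹ * Y'‖ ^ 2 + ‖Y‖ ^ 2) - ‖p⁻¹‖ * ‖F‖ * ‖Y‖ ≤
      ((-p' / p ^ 2 * Y' + p⁻¹ * (p ^ 2 * Y - F)) * star Y + p⁻¹ * Y' * star Y').re := by
  obtain ⟨u, rfl⟩ : ∃ u, Y' = p * u := ⟨p⁻¹ * Y', by field_simp⟩
  set r := p' / p with hr
  have e1 : (-p' / p ^ 2 * (p * u) + p⁻¹ * (p ^ 2 * Y - F)) * star Y + p⁻¹ * (p * u) * star (p * u)
      = -(r * u * star Y) - p⁻¹ * F * star Y + p * (Y * star Y) + star p * (u * star u) := by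
    rw [hr, star_mul]; field_simp; ring
  have e2 : p⁻¹ * (p * u) = u := by field_simp
  have hm : ∀ z : ℂ, z * star z = ((‖z‖ ^ 2 : ℝ) : ℂ) := by
    intro z
    have := Complex.mul_conj z
    rw [Complex.normSq_eq_norm_sq] at this
    exact this
  have b1 : (r * u * star Y).re ≤ ‖r‖ * ‖u‖ * ‖Y‖ := by
    refine (re_le_norm _).trans ?_
    rw [norm_mul, norm_mul, norm_star]
  have b2 : (p⁻¹ * F * star Y).re ≤ ‖p⁻¹‖ * ‖F‖ * ‖Y‖ := by
    refine (re_le_norm _).trans ?_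
    rw [norm_mul, norm_mul, norm_star]
  have hps : (star p).re = p.re := Complex.conj_re p
  rw [e1, e2, hm, hm, add_re, add_re, sub_re, neg_re, re_mul_ofReal, re_mul_ofReal, hps]
  nlinarith [mul_nonneg (norm_nonneg r) (sq_nonneg (‖u‖ - ‖Y‖)),
    mul_le_mul_of_nonneg_right h (add_nonneg (sq_nonneg ‖u‖) (sq_nonneg ‖Y‖))]

/-- The energy `Re (y' ȳ / p)`, where `p = √q`. -/
def energy (q y y' : ℝ → ℂ) (x : ℝ) : ℝ := ((sqrtQ q x)⁻¹ * y' x * star (y x)).re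

section Energy

variable {q q' f y y' : ℝ → ℂ} {C₀ : ℝ}

theorem energy_le (x : ℝ) : energy q y y' x ≤ ‖(sqrtQ q x)⁻¹ * y' x‖ * ‖y x‖ := by
  refine (re_le_norm _).trans ?_
  rw [norm_mul, norm_star]

theorem energy_ac (hA : CondA q q' 0 C₀) (hs : IsSol q f y y') {X : ℝ} (hX : 0 ≤ X) :
    AbsolutelyContinuousOnInterval (energy q y y') 0 X := by
  have hstar : AbsolutelyContinuousOnInterval (fun x => star (y x)) 0 X :=
    ac_of_dist_le (K := 1) (hs.1.ac hX) fun _ _ _ _ => by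
      rw [one_mul, dist_eq_norm, ← star_sub, norm_star, dist_eq_norm]
  have h1 := ((hA.ac_inv hX).fun_smul (hs.2.ac hX)).fun_smul hstar
  refine ac_of_dist_le (K := 1) h1 fun _ _ _ _ => ?_
  rw [one_mul, Real.dist_eq, energy, energy, ← sub_re, dist_eq_norm]
  exact abs_re_le_norm _

theorem energy_ae_deriv (hA : CondA q q' 0 C₀) (hs : IsSol q f y y') (X : ℝ) :
    ∀ᵐ x, x ∈ Set.Ioo 0 X → ∃ d, HasDerivAt (energy q y y') d x ∧
      C₀ * (‖(sqrtQ q x)⁻¹ * y' x‖ ^ 2 + ‖y x‖ ^ 2) - ‖(sqrtQ q x)⁻¹‖ * ‖f x‖ * ‖y x‖ ≤ d := by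
  filter_upwards [hA.2.1.ae_hasDerivAt X, hs.1.ae_hasDerivAt X, hs.2.ae_hasDerivAt X,
    hA.2.2.2.2.2] with x hq hy hy' hx hmem
  have h0 : 0 ≤ x := hmem.1.le
  have hp0 := hA.ne_zero h0
  have h1 := (hasDerivAt_sqrtQ (hA.slit h0) (hq hmem)).fun_inv hp0
  have h2 := (h1.fun_mul (hy' hmem)).fun_mul (hy hmem).star
  have h3 := (reCLM.hasFDerivAt (x := (sqrtQ q x)⁻¹ * y' x * star (y x))).comp_hasDerivAt x h2
  refine ⟨_, h3, ?_⟩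
  have := pointwise_energy (sqrtQ q x) (sqrtQD q q' x) (y x) (y' x) (f x) hp0 (hx h0)
  rw [sqrtQ_sq] at this ⊢
  exact this

/-- The integrated energy inequality, with the term `|s| |f| |y|` split by Young's inequality so that
half of `C₀ |y|²` survives. -/
theorem energy_ineq (hA : CondA q q' 0 C₀) (hs : IsSol q f y y') {a b : ℝ} (ha : 0 ≤ a)
    (hab : a ≤ b) (hf : IntervalIntegrable (fun x => ‖f x‖ ^ 2) volume a b) :
    C₀ / 2 * (∫ x in a..b, ‖y x‖ ^ 2) - C₀⁻¹ ^ 3 / 2 * (∫ x in a..b, ‖f x‖ ^ 2) ≤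
      energy q y y' b - energy q y y' a := by
  have hy : IntervalIntegrable (fun x => ‖y x‖ ^ 2) volume a b := by
    refine ContinuousOn.intervalIntegrable ?_
    rw [Set.uIcc_of_le hab]
    exact (hs.1.continuousOn.mono (fun t ht => ha.trans ht.1)).norm.pow 2
  rw [← intervalIntegral.integral_const_mul, ← intervalIntegral.integral_const_mul,
    ← intervalIntegral.integral_sub (hy.const_mul _) (hf.const_mul _)]
  refine integral_le_sub_of_ac hab ((energy_ac hA hs (ha.trans hab)).mono ?_)
    ((hy.const_mul _).sub (hf.const_mul _)) ?_
  · rw [Set.uIcc_of_le hab, Set.uIcc_of_le (ha.trans hab)]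
    exact Set.Icc_subset_Icc_left ha
  filter_upwards [energy_ae_deriv hA hs b] with x hx hmem
  obtain ⟨d, hd, hle⟩ := hx ⟨ha.trans_lt hmem.1, hmem.2⟩
  refine ⟨d, hd, le_trans ?_ hle⟩
  have hC := hA.pos
  have h1 : ‖(sqrtQ q x)⁻¹‖ * ‖f x‖ * ‖y x‖ ≤ C₀⁻¹ * ‖f x‖ * ‖y x‖ := by
    have := hA.norm_inv_le (ha.trans hmem.1.le)
    gcongr
  have h2 : 0 ≤ C₀ * ‖(sqrtQ q x)⁻¹ * y' x‖ ^ 2 := by positivity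
  have h3 : 0 ≤ C₀ / 2 * (‖y x‖ - C₀⁻¹ ^ 2 * ‖f x‖) ^ 2 := by positivity
  have h4 : C₀ / 2 * (‖y x‖ - C₀⁻¹ ^ 2 * ‖f x‖) ^ 2 =
      C₀ / 2 * ‖y x‖ ^ 2 - C₀⁻¹ * ‖f x‖ * ‖y x‖ + C₀⁻¹ ^ 3 / 2 * ‖f x‖ ^ 2 := by
    field_simp
    ring
  linarith

theorem energy_ineq_hom (hA : CondA q q' 0 C₀) (hs : IsSol q (fun _ => 0) y y') {a b : ℝ}
    (ha : 0 ≤ a) (hab : a ≤ b) :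
    C₀ / 2 * (∫ x in a..b, ‖y x‖ ^ 2) ≤ energy q y y' b - energy q y y' a := by
  simpa using energy_ineq hA hs ha hab (by simp)

theorem IsSol.intervalIntegrable_sq (hs : IsSol q f y y') {a b : ℝ} (ha : 0 ≤ a) (hb : 0 ≤ b) :
    IntervalIntegrable (fun x => ‖y x‖ ^ 2) volume a b := by
  refine ContinuousOn.intervalIntegrable ?_
  refine (hs.1.continuousOn.mono (fun t ht => ?_)).norm.pow 2
  exact (le_min ha hb).trans ht.1

theorem IsSol.integral_sq_pos (hs : IsSol q f y y') {x b : ℝ} (hx : 0 ≤ x) (hxb : x < b)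
    (h0 : y x ≠ 0) : 0 < ∫ t in (0:ℝ)..b, ‖y t‖ ^ 2 := by
  refine intervalIntegral.integral_pos (hx.trans_lt hxb)
    ((hs.1.continuousOn.mono Set.Icc_subset_Ici_self).norm.pow 2)
    (fun _ _ => by positivity) ⟨x, ⟨hx, hxb.le⟩, by positivity⟩

/-- A nontrivial homogeneous solution whose energy vanishes at `0` is not square integrable: the
negative reciprocal of its energy is bounded, while its derivative is at least `C₀ (2 - |y|²)`
as soon as the energy is positive. -/
theorem not_memL2_of_hom (hA : CondA q q' 0 C₀) (hs : IsSol q (fun _ => 0) y y')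
    (h0 : energy q y y' 0 = 0) (hn : NontrivialSol y) :
    ¬ IntegrableOn (fun x => ‖y x‖ ^ 2) (Set.Ici (0:ℝ)) volume := by
  intro hint
  obtain ⟨x₀, hx₀, hy₀⟩ := hn
  have hC := hA.pos
  set a := x₀ + 1 with ha
  have ha0 : 0 ≤ a := by linarith
  have hposa : 0 < energy q y y' a := by
    have h1 := energy_ineq_hom hA hs le_rfl ha0
    have h2 := hs.integral_sq_pos hx₀ (show x₀ < a by linarith) hy₀
    have : 0 < C₀ / 2 * ∫ x in (0:ℝ)..a, ‖y x‖ ^ 2 := by positivity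
    linarith
  have hmono : ∀ x, a ≤ x → energy q y y' a ≤ energy q y y' x := by
    intro x hx
    have h1 := energy_ineq_hom hA hs ha0 hx
    have : 0 ≤ C₀ / 2 * ∫ x in a..x, ‖y x‖ ^ 2 :=
      mul_nonneg (by positivity) (intervalIntegral.integral_nonneg hx fun _ _ => by positivity)
    linarith
  -- integrating `(-1/Ψ)' ≥ C₀ (2 - |y|²)` over `[a, X]`
  have key : ∀ X, a ≤ X → C₀ * (2 * (X - a)) - C₀ * (∫ x in a..X, ‖y x‖ ^ 2) ≤
      (energy q y y' a)⁻¹ := by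
    intro X hX
    have hX0 := ha0.trans hX
    have hac : AbsolutelyContinuousOnInterval (fun x => -(energy q y y' x)⁻¹) a X := by
      have h1 : AbsolutelyContinuousOnInterval (energy q y y') a X := by
        refine (energy_ac hA hs hX0).mono ?_
        rw [Set.uIcc_of_le hX, Set.uIcc_of_le hX0]
        exact Set.Icc_subset_Icc_left ha0
      refine ac_of_dist_le (K := (energy q y y' a)⁻¹ * (energy q y y' a)⁻¹) h1 ?_
      intro s hs' t ht
      rw [Set.uIcc_of_le hX] at hs' ht
      have p1 := hmono s hs'.1
      have p2 := hmono t ht.1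
      have q1 := hposa.trans_le p1
      have q2 := hposa.trans_le p2
      have e : -(energy q y y' s)⁻¹ - -(energy q y y' t)⁻¹ =
          (energy q y y' s)⁻¹ * (energy q y y' t)⁻¹ * (energy q y y' s - energy q y y' t) := by
        field_simp
        ring
      rw [Real.dist_eq, Real.dist_eq, e, abs_mul, abs_mul, abs_of_pos (inv_pos.2 q1),
        abs_of_pos (inv_pos.2 q2)]
      gcongr
    have hyi := hs.intervalIntegrable_sq ha0 hX0
    have h2 := integral_le_sub_of_ac (g := fun x => C₀ * 2 - C₀ * ‖y x‖ ^ 2) hX hac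
      (intervalIntegrable_const.sub (hyi.const_mul C₀)) ?_
    · rw [intervalIntegral.integral_sub intervalIntegrable_const (hyi.const_mul C₀),
        intervalIntegral.integral_const, intervalIntegral.integral_const_mul, smul_eq_mul] at h2
      have : 0 < (energy q y y' X)⁻¹ := inv_pos.2 (hposa.trans_le (hmono X hX))
      linarith
    · filter_upwards [energy_ae_deriv hA hs X] with x hx hmem
      obtain ⟨d, hd, hle⟩ := hx ⟨ha0.trans_lt hmem.1, hmem.2⟩
      have hE := hposa.trans_le (hmono x hmem.1.le)
      refine ⟨_, (hd.fun_inv hE.ne').fun_neg, ?_⟩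
      have hup := energy_le (q := q) (y := y) (y' := y') x
      set U := ‖(sqrtQ q x)⁻¹ * y' x‖
      set E := energy q y y' x
      simp only [norm_zero, mul_zero, zero_mul, sub_zero] at hle
      have hU : 0 ≤ U := norm_nonneg _
      have hyn := norm_nonneg (y x)
      -- `(U / E - ‖y‖) ^ 2 ≥ 0` together with `U ‖y‖ / E ≥ 1`
      rw [neg_div, neg_neg, le_div_iff₀ (by positivity)]
      have s1 : 0 ≤ C₀ * (U - E * ‖y x‖) ^ 2 := by positivity
      have s2 : 0 ≤ C₀ * E * (U * ‖y x‖ - E) :=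
        mul_nonneg (by positivity) (by linarith)
      have s3 : 0 ≤ C₀ * ‖y x‖ ^ 2 := by positivity
      nlinarith
  set I := ∫ x in Set.Ici (0:ℝ), ‖y x‖ ^ 2
  have hI : ∀ X, a ≤ X → ∫ x in a..X, ‖y x‖ ^ 2 ≤ I := by
    intro X hX
    rw [intervalIntegral.integral_of_le hX]
    exact setIntegral_mono_set hint (Filter.Eventually.of_forall fun _ => by positivity)
      (Filter.Eventually.of_forall fun t ht => ha0.trans ht.1.le)
  have hI0 : 0 ≤ I := integral_nonneg fun _ => by positivity
  set e := (energy q y y' a)⁻¹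
  have he : 0 < e := inv_pos.2 hposa
  -- at this endpoint `key` forces `2 e + C₀ I ≤ e`
  have h1 := key (a + I + e / C₀) (by have : 0 < e / C₀ := by positivity
                                      linarith)
  have h2 := hI (a + I + e / C₀) (by have : 0 < e / C₀ := by positivity
                                     linarith)
  have h3 : C₀ * (e / C₀) = e := by field_simp
  have hcI : 0 ≤ C₀ * I := by positivity
  have h4 := mul_le_mul_of_nonneg_left h2 hC.le
  have h5 : C₀ * (2 * (a + I + e / C₀ - a)) = 2 * (C₀ * I) + 2 * e := by
    linear_combination 2 * h3
  linarith

end Energy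

/-! ### Boundary value problems in `L₂` -/

theorem LocACOn.add_const_mul {f f' g g' : ℝ → ℂ} (hf : LocACOn f f' 0) (hg : LocACOn g g' 0)
    (c : ℂ) : LocACOn (fun x => f x + c * g x) (fun x => f' x + c * g' x) 0 := by
  refine ⟨fun b hb => (hf.1 b hb).add ((hg.1 b hb).const_mul c), fun x hx => ?_⟩
  beta_reduce
  rw [intervalIntegral.integral_add (hf.1 x hx) ((hg.1 x hx).const_mul c),
    intervalIntegral.integral_const_mul, hf.2 x hx, hg.2 x hx]
  ring

theorem IsSol.add_const_mul {q f g y y' z z' : ℝ → ℂ} (hy : IsSol q f y y') (hz : IsSol q g z z')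
    (c : ℂ) :
    IsSol q (fun x => f x + c * g x) (fun x => y x + c * z x) (fun x => y' x + c * z' x) := by
  refine ⟨hy.1.add_const_mul hz.1 c, ?_⟩
  have h := hy.2.add_const_mul hz.2 c
  have e : (fun x => q x * (y x + c * z x) - (f x + c * g x)) =
      fun x => q x * y x - f x + c * (q x * z x - g x) := by
    funext x; ring
  rw [e]; exact h

theorem MemL2.intervalIntegrable_sq {f : ℝ → ℂ} (hf : MemL2 (fun _ => 1) f) (b : ℝ)
    (hb : 0 ≤ b) : IntervalIntegrable (fun x => ‖f x‖ ^ 2) volume 0 b := by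
  rw [intervalIntegrable_iff_integrableOn_Ioc_of_le hb]
  have := hf.2
  simp only [one_mul] at this
  exact this.mono_set fun t ht => ht.1.le

theorem MemL2.intervalIntegrable {f : ℝ → ℂ} (hf : MemL2 (fun _ => 1) f) (b : ℝ)
    (hb : 0 ≤ b) : IntervalIntegrable f volume 0 b := by
  have h1 : IntervalIntegrable (fun x => 1 + ‖f x‖ ^ 2) volume 0 b :=
    intervalIntegrable_const.add (hf.intervalIntegrable_sq b hb)
  refine h1.mono_fun ?_ ?_
  · rw [Set.uIoc_of_le hb]
    exact hf.1.mono_measure (Measure.restrict_mono (fun t ht => ht.1.le) le_rfl)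
  · refine Filter.Eventually.of_forall fun x => ?_
    simp only [Real.norm_eq_abs]
    rw [abs_of_nonneg (by positivity)]
    nlinarith [sq_nonneg (‖f x‖ - 1), norm_nonneg (f x)]

theorem MemL2.integral_le {f : ℝ → ℂ} (hf : MemL2 (fun _ => 1) f) (b : ℝ)
    (hb : 0 ≤ b) : ∫ x in (0:ℝ)..b, ‖f x‖ ^ 2 ≤ ∫ x in Set.Ici (0:ℝ), ‖f x‖ ^ 2 := by
  have := hf.2
  simp only [one_mul] at this
  rw [intervalIntegral.integral_of_le hb]
  exact setIntegral_mono_set this (Filter.Eventually.of_forall fun _ => by positivity)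
    (Filter.Eventually.of_forall fun t ht => ht.1.le)

/-- A uniform bound on the integrals over `[0, X]` gives membership in `L₂(ℝ₊)` with the same
bound. -/
theorem memL2_of_bound {y : ℝ → ℂ} (hy : Continuous y) {K : ℝ}
    (h : ∀ X, 0 ≤ X → ∫ x in (0:ℝ)..X, ‖y x‖ ^ 2 ≤ K) :
    MemL2 (fun _ => 1) y ∧ ∫ x in Set.Ici (0:ℝ), ‖y x‖ ^ 2 ≤ K := by
  have hc : Continuous fun x => ‖y x‖ ^ 2 := hy.norm.pow 2
  have hI : IntegrableOn (fun x => ‖y x‖ ^ 2) (Set.Ioi (0:ℝ)) volume := by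
    refine integrableOn_Ioi_of_intervalIntegral_norm_bounded (l := atTop) (b := id) K 0
      (fun i => hc.integrableOn_Ioc) tendsto_id ?_
    filter_upwards [eventually_ge_atTop 0] with X hX
    simpa using h X hX
  refine ⟨⟨hy.aestronglyMeasurable, ?_⟩, ?_⟩
  · simpa [integrableOn_Ici_iff_integrableOn_Ioi] using hI
  · rw [integral_Ici_eq_integral_Ioi]
    refine le_of_tendsto (intervalIntegral_tendsto_integral_Ioi 0 hI tendsto_id) ?_
    filter_upwards [eventually_ge_atTop 0] with X hX
    exact h X hX

section Existence

variable {q q' : ℝ → ℂ} {C₀ : ℝ}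

/-- Bounded solvability when the boundary condition at `0` is encoded by a homogeneous solution
`φ` satisfying it. The solution is a limit of solutions `y₀ + c n * φ` that vanish at points
tending to infinity. -/
theorem exists_bounded_sol (hA : CondA q q' 0 C₀) {f φ φ' y₀ y₀' : ℝ → ℂ}
    (hf : MemL2 (fun _ => 1) f) (hφ : IsSol q (fun _ => 0) φ φ') (hφc : Continuous φ)
    (hφn : NontrivialSol φ) (hφb : φ 0 = 0 ∨ φ' 0 = 0)
    (hy₀ : IsSol q f y₀ y₀') (hy₀c : Continuous y₀) (h0 : y₀ 0 = 0) (h0' : y₀' 0 = 0) :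
    ∃ c : ℂ, MemL2 (fun _ => 1) (fun x => y₀ x + c * φ x) ∧
      (∫ x in Set.Ici (0:ℝ), ‖y₀ x + c * φ x‖ ^ 2) ≤
        (C₀⁻¹ ^ 2) ^ 2 * ∫ x in Set.Ici (0:ℝ), ‖f x‖ ^ 2 := by
  have hC := hA.pos
  obtain ⟨x₀, hx₀, hφx₀⟩ := hφn
  set F := ∫ x in Set.Ici (0:ℝ), ‖f x‖ ^ 2 with hF
  have hsol : ∀ c : ℂ, IsSol q f (fun x => y₀ x + c * φ x) (fun x => y₀' x + c * φ' x) := by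
    intro c; simpa using hy₀.add_const_mul hφ c
  have hφE : energy q φ φ' 0 = 0 := by
    rcases hφb with h | h <;> simp [energy, h]
  have hE0 : ∀ c : ℂ, energy q (fun x => y₀ x + c * φ x) (fun x => y₀' x + c * φ' x) 0 = 0 := by
    intro c
    rcases hφb with h | h <;> simp [energy, h, h0, h0']
  have hne : ∀ X, x₀ < X → φ X ≠ 0 := by
    intro X hX hz
    have h1 := energy_ineq_hom hA hφ le_rfl (hx₀.trans hX.le)
    have h2 := hφ.integral_sq_pos hx₀ hX hφx₀
    have h3 : energy q φ φ' X = 0 := by simp [energy, hz]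
    have : 0 < C₀ / 2 * ∫ x in (0:ℝ)..X, ‖φ x‖ ^ 2 := by positivity
    linarith
  -- the a priori bound for a solution vanishing at `X`, uniform in `X`
  have hbd : ∀ X, x₀ < X → ∀ c, y₀ X + c * φ X = 0 → ∀ Z, 0 ≤ Z → Z ≤ X →
      ∫ x in (0:ℝ)..Z, ‖y₀ x + c * φ x‖ ^ 2 ≤ (C₀⁻¹ ^ 2) ^ 2 * F := by
    intro X hX c hc Z hZ hZX
    have hX0 := hx₀.trans hX.le
    have h1 := energy_ineq hA (hsol c) le_rfl hX0 (hf.intervalIntegrable_sq X hX0)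
    have h3 : energy q (fun x => y₀ x + c * φ x) (fun x => y₀' x + c * φ' x) X = 0 := by
      simp [energy, hc]
    rw [h3, hE0, sub_zero] at h1
    have h2 := hf.integral_le X hX0
    have h4 : ∫ x in (0:ℝ)..Z, ‖y₀ x + c * φ x‖ ^ 2 ≤ ∫ x in (0:ℝ)..X, ‖y₀ x + c * φ x‖ ^ 2 := by
      refine intervalIntegral.integral_mono_interval le_rfl hZ hZX
        (Filter.Eventually.of_forall fun _ => by positivity) ?_
      exact (hsol c).intervalIntegrable_sq le_rfl hX0
    refine h4.trans ?_
    have h5 : C₀ / 2 * (∫ x in (0:ℝ)..X, ‖y₀ x + c * φ x‖ ^ 2) ≤ C₀⁻¹ ^ 3 / 2 * F := by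
      have : C₀⁻¹ ^ 3 / 2 * (∫ x in (0:ℝ)..X, ‖f x‖ ^ 2) ≤ C₀⁻¹ ^ 3 / 2 * F := by gcongr
      linarith
    have h6 : C₀⁻¹ ^ 3 / 2 * F = C₀ / 2 * ((C₀⁻¹ ^ 2) ^ 2 * F) := by field_simp
    rw [h6] at h5
    exact le_of_mul_le_mul_left h5 (by positivity)
  -- the constants making the solution vanish at `N + n`
  set N := x₀ + 1 with hN
  have hN0 : 0 ≤ N := by linarith
  let c : ℕ → ℂ := fun n => -y₀ (N + n) / φ (N + n)
  have hlt : ∀ n : ℕ, x₀ < N + n := by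
    intro n
    have : (0:ℝ) ≤ n := n.cast_nonneg
    linarith
  have hc : ∀ n : ℕ, y₀ (N + n) + c n * φ (N + n) = 0 := by
    intro n
    have := hne _ (hlt n)
    simp only [c]; field_simp; ring
  have hP : 0 < ∫ x in (0:ℝ)..N, ‖φ x‖ ^ 2 := hφ.integral_sq_pos hx₀ (by linarith) hφx₀
  -- `c n` is controlled by the a priori bound on the fixed interval `[0, N]`
  have hcb : ∀ n : ℕ, ‖c n‖ ^ 2 * (∫ x in (0:ℝ)..N, ‖φ x‖ ^ 2) ≤
      2 * ((C₀⁻¹ ^ 2) ^ 2 * F) + 2 * ∫ x in (0:ℝ)..N, ‖y₀ x‖ ^ 2 := by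
    intro n
    have h1 := hbd _ (hlt n) (c n) (hc n) N hN0 (by
      have : (0:ℝ) ≤ n := n.cast_nonneg
      linarith)
    have i1 := (hsol (c n)).intervalIntegrable_sq le_rfl hN0
    have i2 := hy₀.intervalIntegrable_sq le_rfl hN0
    have i3 := hφ.intervalIntegrable_sq le_rfl hN0
    have h2 : ∫ x in (0:ℝ)..N, ‖c n‖ ^ 2 * ‖φ x‖ ^ 2 ≤
        ∫ x in (0:ℝ)..N, (2 * ‖y₀ x + c n * φ x‖ ^ 2 + 2 * ‖y₀ x‖ ^ 2) := by
      refine intervalIntegral.integral_mono_on hN0 (i3.const_mul _)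
        ((i1.const_mul 2).add (i2.const_mul 2)) fun x _ => ?_
      have h3 : ‖c n * φ x‖ ≤ ‖y₀ x + c n * φ x‖ + ‖y₀ x‖ := by
        have := norm_sub_le (y₀ x + c n * φ x) (y₀ x)
        rwa [add_sub_cancel_left] at this
      rw [← mul_pow, ← norm_mul]
      nlinarith [sq_nonneg (‖y₀ x + c n * φ x‖ - ‖y₀ x‖), norm_nonneg (c n * φ x)]
    rw [intervalIntegral.integral_const_mul, intervalIntegral.integral_add (i1.const_mul 2)
      (i2.const_mul 2), intervalIntegral.integral_const_mul,
      intervalIntegral.integral_const_mul] at h2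
    linarith
  obtain ⟨R, hR⟩ : ∃ R, ∀ n, c n ∈ Metric.closedBall (0:ℂ) R := by
    set D := 2 * ((C₀⁻¹ ^ 2) ^ 2 * F) + 2 * ∫ x in (0:ℝ)..N, ‖y₀ x‖ ^ 2
    refine ⟨Real.sqrt (D / ∫ x in (0:ℝ)..N, ‖φ x‖ ^ 2), fun n => ?_⟩
    rw [mem_closedBall_zero_iff]
    apply Real.le_sqrt_of_sq_le
    rw [le_div_iff₀ hP]
    exact hcb n
  obtain ⟨cl, -, σ, hσ, hlim⟩ := (isCompact_closedBall (0:ℂ) R).tendsto_subseq hR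
  refine ⟨cl, memL2_of_bound (hy₀c.add (continuous_const.mul hφc)) fun X hX => ?_⟩
  have hcont : Continuous fun w : ℂ => ∫ x in (0:ℝ)..X, ‖y₀ x + w * φ x‖ ^ 2 := by
    refine intervalIntegral.continuous_parametric_intervalIntegral_of_continuous' ?_ 0 X
    exact ((hy₀c.comp continuous_snd).add
      (continuous_fst.mul (hφc.comp continuous_snd))).norm.pow 2
  refine le_of_tendsto ((hcont.tendsto cl).comp hlim) ?_
  obtain ⟨m, hm⟩ := exists_nat_ge X
  filter_upwards [eventually_ge_atTop m] with n hn
  refine hbd _ (hlt (σ n)) (c (σ n)) (hc _) X hX ?_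
  have h1 : (m:ℝ) ≤ σ n := by exact_mod_cast hn.trans (hσ.id_le n)
  linarith

/-- Two `L₂` solutions with the same boundary condition agree: their difference is a homogeneous
`L₂` solution with zero initial energy. -/
theorem sol_unique (hA : CondA q q' 0 C₀) {f y y' z z' : ℝ → ℂ}
    (hy : IsSol q f y y') (hz : IsSol q f z z') (hyL : MemL2 (fun _ => 1) y)
    (hzL : MemL2 (fun _ => 1) z) (hb : (y 0 = 0 ∧ z 0 = 0) ∨ (y' 0 = 0 ∧ z' 0 = 0)) :
    ∀ x, 0 ≤ x → z x = y x := by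
  by_contra! hcon
  obtain ⟨x, hx, hne⟩ := hcon
  have hs : IsSol q (fun _ => 0) (fun x => z x + (-1) * y x) (fun x => z' x + (-1) * y' x) := by
    simpa using hz.add_const_mul hy (-1)
  refine not_memL2_of_hom hA hs ?_ ⟨x, hx, fun h => hne (by linear_combination h)⟩ ?_
  · rcases hb with ⟨h1, h2⟩ | ⟨h1, h2⟩ <;> simp [energy, h1, h2]
  · have h1 := hyL.2
    have h2 := hzL.2
    simp only [one_mul] at h1 h2
    have hm : AEStronglyMeasurable (fun x => z x + (-1) * y x)
        (volume.restrict (Set.Ici (0:ℝ))) := hzL.1.add (hyL.1.const_mul (-1))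
    refine Integrable.mono' ((h2.const_mul 2).add (h1.const_mul 2)) (hm.norm.pow 2) ?_
    refine Filter.Eventually.of_forall fun t => ?_
    have h3 : ‖z t + (-1) * y t‖ ≤ ‖z t‖ + ‖y t‖ := by
      refine (norm_add_le _ _).trans ?_
      simp
    rw [Real.norm_eq_abs, abs_of_nonneg (by positivity)]
    simp only [Pi.add_apply]
    nlinarith [sq_nonneg (‖z t‖ - ‖y t‖), norm_nonneg (z t + (-1) * y t)]

end Existence

/-! ### The Dirichlet and Neumann operators -/

/-- If `q` satisfies condition A for `x ≥ 0`, then the Dirichlet and Neumann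
operators are boundedly invertible in `L₂(ℝ₊)`: for every `f ∈ L₂(ℝ₊)` there is
a unique `L₂(ℝ₊)`-solution of `-y'' + q y = f` with `y(0)=0` (resp. `y'(0)=0`),
and it satisfies `‖y‖ ≤ C‖f‖`. -/
theorem statement8 (q q' : ℝ → ℂ) (C₀ : ℝ) (hA : CondA q q' 0 C₀) :
    ∃ C > (0:ℝ), ∀ f : ℝ → ℂ, MemL2 (fun _ => 1) f →
      (∃ y y', IsSol q f y y' ∧ MemL2 (fun _ => 1) y ∧ y 0 = 0 ∧
        (∫ x in Set.Ici (0:ℝ), ‖y x‖ ^ 2) ≤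
          C ^ 2 * ∫ x in Set.Ici (0:ℝ), ‖f x‖ ^ 2 ∧
        ∀ z z', IsSol q f z z' → MemL2 (fun _ => 1) z → z 0 = 0 →
          ∀ x, 0 ≤ x → z x = y x) ∧
      (∃ y y', IsSol q f y y' ∧ MemL2 (fun _ => 1) y ∧ y' 0 = 0 ∧
        (∫ x in Set.Ici (0:ℝ), ‖y x‖ ^ 2) ≤
          C ^ 2 * ∫ x in Set.Ici (0:ℝ), ‖f x‖ ^ 2 ∧
        ∀ z z', IsSol q f z z' → MemL2 (fun _ => 1) z → z' 0 = 0 →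
          ∀ x, 0 ≤ x → z x = y x) := by
  have hC := hA.pos
  refine ⟨C₀⁻¹ ^ 2, by positivity, fun f hf => ?_⟩
  have hq := hA.2.1.continuousOn
  obtain ⟨y₀, y₀', hy₀, hy₀c, h0, h0'⟩ := ivp_exists q f hq hf.intervalIntegrable 0 0
  have hz : ∀ b : ℝ, 0 ≤ b → IntervalIntegrable (fun _ => (0:ℂ)) volume 0 b :=
    fun b _ => intervalIntegrable_const
  constructor
  · obtain ⟨φ, φ', hφ, hφc, hφ0, hφ0'⟩ := ivp_exists q (fun _ => 0) hq hz 0 1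
    have hφn : NontrivialSol φ := by
      by_contra hcon
      have hzero : ∀ x, 0 ≤ x → φ x = 0 := by
        intro x hx
        by_contra h
        exact hcon ⟨x, hx, h⟩
      -- if `φ` vanished identically then `φ' ≡ 1`, so `φ x = x`
      have h1 : ∀ x, 0 ≤ x → φ' x = 1 := by
        intro x hx
        rw [hφ.2.2 x hx, hφ0', intervalIntegral.integral_congr (g := fun _ => (0:ℂ))]
        · simp
        · intro t ht
          rw [Set.uIcc_of_le hx] at ht
          simp [hzero t ht.1]
      have h2 := hφ.1.2 1 zero_le_one
      rw [hzero 1 zero_le_one, hφ0, intervalIntegral.integral_congr (g := fun _ => (1:ℂ))] at h2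
      · simp at h2
      · intro t ht
        rw [Set.uIcc_of_le zero_le_one] at ht
        exact h1 t ht.1
    obtain ⟨c, hmem, hle⟩ := exists_bounded_sol hA hf hφ hφc hφn (Or.inl hφ0) hy₀ hy₀c h0 h0'
    have hs : IsSol q f (fun x => y₀ x + c * φ x) (fun x => y₀' x + c * φ' x) := by
      simpa using hy₀.add_const_mul hφ c
    have hb : y₀ 0 + c * φ 0 = 0 := by simp [h0, hφ0]
    exact ⟨_, _, hs, hmem, hb, hle, fun z z' hz hzL hz0 =>
      sol_unique hA hs hz hmem hzL (Or.inl ⟨hb, hz0⟩)⟩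
  · obtain ⟨φ, φ', hφ, hφc, hφ0, hφ0'⟩ := ivp_exists q (fun _ => 0) hq hz 1 0
    have hφn : NontrivialSol φ := ⟨0, le_rfl, by simp [hφ0]⟩
    obtain ⟨c, hmem, hle⟩ := exists_bounded_sol hA hf hφ hφc hφn (Or.inr hφ0') hy₀ hy₀c h0 h0'
    have hs : IsSol q f (fun x => y₀ x + c * φ x) (fun x => y₀' x + c * φ' x) := by
      simpa using hy₀.add_const_mul hφ c
    have hb : y₀' 0 + c * φ' 0 = 0 := by simp [h0', hφ0']
    exact ⟨_, _, hs, hmem, hb, hle, fun z z' hz hzL hz0 =>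
      sol_unique hA hs hz hmem hzL (Or.inr ⟨hb, hz0⟩)⟩
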